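/- Let χ : ℝ² → ℝ be continuously differentiable with compact support. There exists a constant C depending only on χ such that for every Schwartz function h : ℝ² → ℂ with Fourier transform ĥ, the function η(y,z) = ∫_{ℝ²} e^{2πi y·ξ} χ(zξ) ĥ(ξ) dξ, defined for y ∈ ℝ² and z < 0, satisfies ∫_{ℝ²} ∫_{−∞}^{0} ( |∂₁η|² + |∂₂η|² + |∂_zη|² ) dz dy ≤ C ∫_{ℝ²} (1+|ξ|²)^{1/2} |ĥ(ξ)|² dξ. -/

import Mathlib

open MeasureTheory

/-- Fourier transform on `ℝ²`: `ĥ(ξ) = ∫_{ℝ²} e^{−2πi y·ξ} h(y) dy`. -/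
noncomputable def fourier2 (h : (Fin 2 → ℝ) → ℂ) (ξ : Fin 2 → ℝ) : ℂ :=
  ∫ y : Fin 2 → ℝ,
    Complex.exp (-((2 * Real.pi * ∑ i : Fin 2, y i * ξ i : ℝ) : ℂ) * Complex.I) * h y

/-- The smoothing extension `η(y,z) = ∫_{ℝ²} e^{2πi y·ξ} χ(zξ) ĥ(ξ) dξ` of `h` to the lower
half-space. -/
noncomputable def smoothExt (χ : (Fin 2 → ℝ) → ℝ) (h : (Fin 2 → ℝ) → ℂ)
    (p : (Fin 2 → ℝ) × ℝ) : ℂ :=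
  ∫ ξ : Fin 2 → ℝ,
    Complex.exp (((2 * Real.pi * ∑ i : Fin 2, p.1 i * ξ i : ℝ) : ℂ) * Complex.I)
      * (χ (p.2 • ξ) : ℂ) * fourier2 h ξ

/-!
By Plancherel in `y`, the energy of the extension on the slice of height `z` is the integral over
frequencies of `|m(z, ξ)|² |ĥ(ξ)|²`, where the symbol `m` of the gradient satisfies
`|m(z, ξ)| ≤ M ‖ξ‖` and vanishes unless `|z| ‖ξ‖ ≤ R`. Integrating `‖ξ‖²` over the heights
`|z| ≤ R / ‖ξ‖` costs a factor `1 / ‖ξ‖`, which leaves `2 M² R ‖ξ‖ |ĥ(ξ)|²`, and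
`‖ξ‖ ≤ √(1 + ‖ξ‖²)`.
-/

open scoped ENNReal FourierTransform NNReal RealInnerProductSpace SchwartzMap Topology

section Plancherel

variable {E F : Type*} [NormedAddCommGroup E] [InnerProductSpace ℝ E] [FiniteDimensional ℝ E]
  [MeasurableSpace E] [BorelSpace E]
  [NormedAddCommGroup F] [InnerProductSpace ℂ F] {g : E → F}

theorem continuous_fourier_of_integrable (hg : Integrable g) : Continuous (𝓕 g) :=
  VectorFourier.fourierIntegral_continuous Real.continuous_fourierChar continuous_inner hg

variable [CompleteSpace F]

theorem integral_schwartz_fourier_smul_eq (ψ : 𝓢(E, ℂ)) (hg : Integrable g) :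
    ∫ x, (𝓕 ψ) x • g x = ∫ x, ψ x • 𝓕 g x := by
  simpa using! VectorFourier.integral_fourierIntegral_smul_eq_flip (L := innerₗ E)
    Real.continuous_fourierChar continuous_inner (ψ.integrable (μ := volume)) hg

theorem fourier_toLp_ae_eq (hg : Integrable g) (hg2 : MemLp g 2) :
    (𝓕 (hg2.toLp g) : Lp F 2 (volume : Measure E)) =ᵐ[volume] 𝓕 g := by
  refine ae_eq_of_integral_contDiff_smul_eq ((Lp.memLp _).locallyIntegrable (by norm_num))
    (continuous_fourier_of_integrable hg).locallyIntegrable fun φ hφ hφs => ?_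
  let ψ : 𝓢(E, ℂ) := (hφs.comp_left (g := Complex.ofReal) rfl).toSchwartzMap
    (Complex.ofRealCLM.contDiff.comp hφ)
  have distribution_eq : ∫ x, (𝓕 ψ) x • hg2.toLp g x =
      ∫ x, ψ x • (𝓕 (hg2.toLp g) : Lp F 2 (volume : Measure E)) x := by
    simpa only [TemperedDistribution.fourier_apply, Lp.toTemperedDistribution_apply] using
      congrArg (fun T => T ψ) (Lp.fourier_toTemperedDistribution_eq (hg2.toLp g))
  have ψ_smul (x : E) (u : F) : ψ x • u = φ x • u := Complex.coe_smul (φ x) u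
  simp_rw [← ψ_smul]
  calc ∫ x, ψ x • (𝓕 (hg2.toLp g) : Lp F 2 (volume : Measure E)) x
      = ∫ x, (𝓕 ψ) x • hg2.toLp g x := distribution_eq.symm
    _ = ∫ x, (𝓕 ψ) x • g x :=
        integral_congr_ae (hg2.coeFn_toLp.mono fun x hx => congrArg ((𝓕 ψ) x • ·) hx)
    _ = ∫ x, ψ x • 𝓕 g x := integral_schwartz_fourier_smul_eq ψ hg

theorem eLpNorm_fourier_eq (hg : Integrable g) (hg2 : MemLp g 2) :
    eLpNorm (𝓕 g) 2 = eLpNorm g 2 := by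
  rw [← eLpNorm_congr_ae (fourier_toLp_ae_eq hg hg2), ← Lp.enorm_def,
    ← eLpNorm_congr_ae hg2.coeFn_toLp, ← Lp.enorm_def, ← ofReal_norm, ← ofReal_norm,
    Lp.norm_fourier_eq]

theorem lintegral_enorm_fourierInv_sq_le (hg : Integrable g) :
    ∫⁻ y, ‖𝓕⁻ g y‖ₑ ^ 2 ≤ ∫⁻ ξ, ‖g ξ‖ₑ ^ 2 := by
  have eLpNorm_sq (u : E → F) : eLpNorm u 2 ^ 2 = ∫⁻ x, ‖u x‖ₑ ^ 2 := by
    simpa using eLpNorm_nnreal_pow_eq_lintegral (f := u) (μ := volume) (p := 2) two_ne_zero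
  by_cases hg2 : MemLp g 2
  · simp_rw [Real.fourierInv_eq_fourier_neg]
    rw [lintegral_neg_eq_self (fun y => ‖𝓕 g y‖ₑ ^ 2), ← eLpNorm_sq, ← eLpNorm_sq,
      eLpNorm_fourier_eq hg hg2]
  · have eLpNorm_eq_top : eLpNorm g 2 = ∞ :=
      not_lt_top_iff.mp fun h => hg2 ⟨hg.aestronglyMeasurable, h⟩
    simp [← eLpNorm_sq, eLpNorm_eq_top]

end Plancherel

section Scaling

variable {E G : Type*} [NormedAddCommGroup E] [NormedAddCommGroup G] {g : E → G}

theorem exists_forall_lt_norm_eq_zero (hg : HasCompactSupport g) :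
    ∃ R, ∀ x, R < ‖x‖ → g x = 0 := by
  obtain ⟨R, hsub⟩ := hg.isCompact.isBounded.subset_closedBall (0 : E)
  refine ⟨R, fun x hx => image_eq_zero_of_notMem_tsupport fun hmem => ?_⟩
  exact hx.not_ge (mem_closedBall_zero_iff.mp (hsub hmem))

variable [NormedSpace ℝ E]

theorem exists_eventually_forall_smul_eq_zero (hg : HasCompactSupport g) {z₀ : ℝ} (hz₀ : z₀ ≠ 0) :
    ∃ r, ∀ᶠ z in 𝓝 z₀, ∀ ξ, r < ‖ξ‖ → g (z • ξ) = 0 := by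
  obtain ⟨R, hzero⟩ := exists_forall_lt_norm_eq_zero hg
  have hz₀' : 0 < ‖z₀‖ := norm_pos_iff.mpr hz₀
  refine ⟨R / (‖z₀‖ / 2), ?_⟩
  filter_upwards [continuous_norm.continuousAt.eventually_const_lt (half_lt_self hz₀')]
    with z hz ξ hξ
  refine hzero _ ?_
  rw [norm_smul]
  calc R < ‖z₀‖ / 2 * ‖ξ‖ := (div_lt_iff₀' (half_pos hz₀')).mp hξ
    _ ≤ ‖z‖ * ‖ξ‖ := by gcongr

theorem enorm_mul_volume_norm_smul_le (ξ : E) (R : ℝ) :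
    ‖ξ‖ₑ * volume {z : ℝ | ‖z • ξ‖ ≤ R} ≤ ENNReal.ofReal (2 * R) := by
  rcases eq_or_ne ξ 0 with rfl | hξ
  · simp
  have hξ' : 0 < ‖ξ‖ := norm_pos_iff.mpr hξ
  have slab_eq : {z : ℝ | ‖z • ξ‖ ≤ R} = Set.Icc (-(R / ‖ξ‖)) (R / ‖ξ‖) := by
    ext z
    rw [Set.mem_ofPred_eq, Set.mem_Icc, ← abs_le, le_div_iff₀ hξ', norm_smul, Real.norm_eq_abs]
  rw [slab_eq, Real.volume_Icc, ← ofReal_norm, ← ENNReal.ofReal_mul hξ'.le]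
  exact (congrArg ENNReal.ofReal (by field_simp; ring)).le

theorem exists_enorm_mul_lintegral_smul_sq_le (hg : Continuous g) (hgs : HasCompactSupport g) :
    ∃ C : ℝ≥0, ∀ ξ, ‖ξ‖ₑ * ∫⁻ z : ℝ, ‖g (z • ξ)‖ₑ ^ 2 ≤ C := by
  obtain ⟨M, hM⟩ := hgs.exists_bound_of_continuous hg
  obtain ⟨R, hR⟩ := exists_forall_lt_norm_eq_zero hgs
  refine ⟨M.toNNReal ^ 2 * (2 * R).toNNReal, fun ξ => ?_⟩
  have pointwise (z : ℝ) : ‖g (z • ξ)‖ₑ ^ 2 ≤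
      {z : ℝ | ‖z • ξ‖ ≤ R}.indicator (fun _ => ENNReal.ofReal M ^ 2) z := by
    by_cases hz : ‖z • ξ‖ ≤ R
    · rw [Set.indicator_of_mem (by exact hz), ← ofReal_norm]
      gcongr
      exact hM _
    · simp [hR _ (not_le.mp hz)]
  have slab_measurable : MeasurableSet {z : ℝ | ‖z • ξ‖ ≤ R} :=
    (isClosed_le (by fun_prop) continuous_const).measurableSet
  calc ‖ξ‖ₑ * ∫⁻ z : ℝ, ‖g (z • ξ)‖ₑ ^ 2
      ≤ ‖ξ‖ₑ * (ENNReal.ofReal M ^ 2 * volume {z : ℝ | ‖z • ξ‖ ≤ R}) := by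
        rw [← lintegral_indicator_const slab_measurable]
        gcongr with z
        exact pointwise z
    _ = ENNReal.ofReal M ^ 2 * (‖ξ‖ₑ * volume {z : ℝ | ‖z • ξ‖ ≤ R}) := mul_left_comm _ _ _
    _ ≤ ENNReal.ofReal M ^ 2 * ENNReal.ofReal (2 * R) := by
        gcongr
        exact enorm_mul_volume_norm_smul_le ξ R
    _ = _ := by push_cast; rfl

end Scaling

section ParametricIntegral

variable {α V F : Type*} [MeasurableSpace α] {μ : Measure α} [NormedAddCommGroup V]
  [NormedSpace ℝ V] [NormedAddCommGroup F] [NormedSpace ℂ F]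

theorem norm_smulRight_le (c : V →L[ℝ] ℂ) (x : F) : ‖c.smulRight x‖ ≤ ‖c‖ * ‖x‖ := by
  refine ContinuousLinearMap.opNorm_le_bound _ (by positivity) fun v => ?_
  calc ‖c v • x‖ ≤ ‖c‖ * ‖v‖ * ‖x‖ := by
        rw [norm_smul]
        gcongr
        exact c.le_opNorm v
    _ = ‖c‖ * ‖x‖ * ‖v‖ := by ring

theorem continuous_smulRight : Continuous fun q : (V →L[ℝ] ℂ) × F => q.1.smulRight q.2 :=
  IsBoundedBilinearMap.continuous (𝕜 := ℝ)
    { add_left := fun c c' x => by ext; simp [add_smul]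
      smul_left := fun r c x => by ext; simp [mul_smul]
      add_right := fun c x x' => by ext; simp
      smul_right := fun r c x => by ext; simp [smul_comm r]
      bound := ⟨1, one_pos, fun c x => by simpa using norm_smulRight_le c x⟩ }

theorem fderiv_integral_smul_apply {m : V → α → ℂ} {m' : V → α → V →L[ℝ] ℂ} {f : α → F}
    {bound : α → ℝ} {p : V} (hm : ∀ᶠ q in 𝓝 p, AEStronglyMeasurable (m q) μ)
    (hm' : AEStronglyMeasurable (m' p) μ) (hf : AEStronglyMeasurable f μ)
    (hint : Integrable (fun a => m p a • f a) μ) (bound_integrable : Integrable bound μ)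
    (hbound : ∀ᶠ q in 𝓝 p, ∀ a, ‖m' q a‖ * ‖f a‖ ≤ bound a)
    (hderiv : ∀ q a, HasFDerivAt (m · a) (m' q a) q) (v : V) :
    fderiv ℝ (fun q => ∫ a, m q a • f a ∂μ) p v = ∫ a, m' p a v • f a ∂μ := by
  have derivative_aestronglyMeasurable :
      AEStronglyMeasurable (fun a => (m' p a).smulRight (f a)) μ :=
    continuous_smulRight.comp_aestronglyMeasurable (hm'.prodMk hf)
  have derivative_integrable : Integrable (fun a => (m' p a).smulRight (f a)) μ :=
    bound_integrable.mono' derivative_aestronglyMeasurable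
      (ae_of_all _ fun a => (norm_smulRight_le _ _).trans (hbound.self_of_nhds a))
  have hasFDerivAt_integral :
      HasFDerivAt (fun q => ∫ a, m q a • f a ∂μ) (∫ a, (m' p a).smulRight (f a) ∂μ) p :=
    hasFDerivAt_integral_of_dominated_of_fderiv_le (F' := fun q a => (m' q a).smulRight (f a))
      hbound (hm.mono fun q hq => hq.smul hf) hint derivative_aestronglyMeasurable
      (ae_of_all _ fun a q hq => (norm_smulRight_le _ _).trans (hq a)) bound_integrable
      (ae_of_all _ fun a q _ => (hderiv q a).smul_const (f a))
  rw [hasFDerivAt_integral.fderiv, ContinuousLinearMap.integral_apply derivative_integrable]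
  rfl

end ParametricIntegral

section DilationExt

variable {E F : Type*} [NormedAddCommGroup E] [InnerProductSpace ℝ E] {χ : E → ℝ}

/-- The symbol of the gradient of `dilationExt` at height `z`: the covector with
`D_(y,z) (e^{2πi⟪ξ, y⟫} χ(zξ)) = e^{2πi⟪ξ, y⟫} • gradSymbol χ z ξ`, namely
`2πi χ(zξ)⟪ξ, ·⟫` in the horizontal directions and `dχ(zξ)ξ` in the vertical one. -/
noncomputable def gradSymbol (χ : E → ℝ) (z : ℝ) (ξ : E) : E × ℝ →L[ℝ] ℂ :=
  (2 * Real.pi * Complex.I * χ (z • ξ)) •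
      (Complex.ofRealCLM ∘L innerSL ℝ ξ ∘L ContinuousLinearMap.fst ℝ E ℝ) +
    (fderiv ℝ χ (z • ξ) ξ : ℂ) • (Complex.ofRealCLM ∘L ContinuousLinearMap.snd ℝ E ℝ)

/-- The compactly supported profile dominating `gradSymbol`: it depends on the height and the
frequency only through their product `zξ`, once a factor `‖ξ‖` is pulled out. -/
noncomputable def symbolEnvelope (χ : E → ℝ) (x : E) : ℝ :=
  2 * Real.pi * ‖χ x‖ + ‖fderiv ℝ χ x‖

theorem continuous_symbolEnvelope (hχ : ContDiff ℝ 1 χ) : Continuous (symbolEnvelope χ) :=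
  (continuous_const.mul hχ.continuous.norm).add (hχ.continuous_fderiv one_ne_zero).norm

theorem hasCompactSupport_symbolEnvelope (hχs : HasCompactSupport χ) :
    HasCompactSupport (symbolEnvelope χ) :=
  HasCompactSupport.add hχs.norm.mul_left (hχs.fderiv (𝕜 := ℝ)).norm

theorem continuous_gradSymbol (hχ : ContDiff ℝ 1 χ) :
    Continuous (Function.uncurry (gradSymbol χ)) := by
  have χ_continuous := hχ.continuous
  have dilation_continuous : Continuous fun q : ℝ × E => q.1 • q.2 := by fun_prop
  have inner_continuous : Continuous fun q : ℝ × E => innerSL ℝ q.2 :=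
    (innerSL ℝ).continuous.comp continuous_snd
  have horizontal_coeff : Continuous fun q : ℝ × E =>
      2 * Real.pi * Complex.I * (χ (q.1 • q.2) : ℂ) := by fun_prop
  have vertical_coeff : Continuous fun q : ℝ × E => (fderiv ℝ χ (q.1 • q.2) q.2 : ℂ) :=
    Complex.continuous_ofReal.comp <|
      ((hχ.continuous_fderiv one_ne_zero).comp dilation_continuous).clm_apply continuous_snd
  exact (horizontal_coeff.smul
    (continuous_const.clm_comp (inner_continuous.clm_comp continuous_const))).add
    (vertical_coeff.smul continuous_const)

theorem norm_gradSymbol_le (χ : E → ℝ) (z : ℝ) (ξ : E) :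
    ‖gradSymbol χ z ξ‖ ≤ symbolEnvelope χ (z • ξ) * ‖ξ‖ := by
  refine ContinuousLinearMap.opNorm_le_bound _ (by unfold symbolEnvelope; positivity) fun v => ?_
  have inner_le : |⟪ξ, v.1⟫| ≤ ‖ξ‖ * ‖v‖ :=
    (abs_real_inner_le_norm ξ v.1).trans (by gcongr; exact norm_fst_le v)
  have fderiv_le : |fderiv ℝ χ (z • ξ) ξ| ≤ ‖fderiv ℝ χ (z • ξ)‖ * ‖ξ‖ :=
    (fderiv ℝ χ (z • ξ)).le_opNorm ξ
  calc ‖gradSymbol χ z ξ v‖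
      ≤ 2 * Real.pi * ‖χ (z • ξ)‖ * |⟪ξ, v.1⟫| + |fderiv ℝ χ (z • ξ) ξ| * |v.2| := by
        refine (norm_add_le _ _).trans_eq ?_
        simp [abs_of_pos Real.pi_pos]
    _ ≤ 2 * Real.pi * ‖χ (z • ξ)‖ * (‖ξ‖ * ‖v‖) + ‖fderiv ℝ χ (z • ξ)‖ * ‖ξ‖ * ‖v‖ := by
        gcongr
        exact norm_snd_le v
    _ = symbolEnvelope χ (z • ξ) * ‖ξ‖ * ‖v‖ := by
        unfold symbolEnvelope
        ring

theorem exists_lintegral_enorm_gradSymbol_sq_le (hχ : ContDiff ℝ 1 χ)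
    (hχs : HasCompactSupport χ) :
    ∃ C : ℝ≥0, ∀ ξ, ∫⁻ z, ‖gradSymbol χ z ξ‖ₑ ^ 2 ≤ C * ‖ξ‖ₑ := by
  obtain ⟨C, hC⟩ := exists_enorm_mul_lintegral_smul_sq_le (continuous_symbolEnvelope hχ)
    (hasCompactSupport_symbolEnvelope hχs)
  refine ⟨C, fun ξ => ?_⟩
  have pointwise (z : ℝ) :
      ‖gradSymbol χ z ξ‖ₑ ^ 2 ≤ ‖ξ‖ₑ ^ 2 * ‖symbolEnvelope χ (z • ξ)‖ₑ ^ 2 := by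
    rw [← mul_pow, mul_comm ‖ξ‖ₑ, ← enorm_norm ξ, ← enorm_mul]
    gcongr
    exact enorm_le_iff_norm_le.mpr <|
      (norm_gradSymbol_le χ z ξ).trans (le_abs_self _)
  calc ∫⁻ z, ‖gradSymbol χ z ξ‖ₑ ^ 2
      ≤ ∫⁻ z : ℝ, ‖ξ‖ₑ ^ 2 * ‖symbolEnvelope χ (z • ξ)‖ₑ ^ 2 := lintegral_mono pointwise
    _ = ‖ξ‖ₑ * (∫⁻ z : ℝ, ‖symbolEnvelope χ (z • ξ)‖ₑ ^ 2) * ‖ξ‖ₑ := by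
        rw [lintegral_const_mul' _ _ (by finiteness)]
        ring
    _ ≤ C * ‖ξ‖ₑ := by gcongr; exact hC ξ

theorem hasFDerivAt_fourierChar_mul_dilation (hχ : Differentiable ℝ χ) (ξ : E) (p : E × ℝ) :
    HasFDerivAt (fun p : E × ℝ => (Real.fourierChar ⟪ξ, p.1⟫ : ℂ) * χ (p.2 • ξ))
      ((Real.fourierChar ⟪ξ, p.1⟫ : ℂ) • gradSymbol χ p.2 ξ) p := by
  have char_deriv : HasFDerivAt (fun p : E × ℝ => (Real.fourierChar ⟪ξ, p.1⟫ : ℂ))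
      ((2 * Real.pi * Complex.I * Real.fourierChar ⟪ξ, p.1⟫) •
        (Complex.ofRealCLM ∘L innerSL ℝ ξ ∘L ContinuousLinearMap.fst ℝ E ℝ)) p := by
    refine ((Real.hasDerivAt_fourierChar ⟪ξ, p.1⟫).hasFDerivAt.comp p
      (innerSL ℝ ξ ∘L ContinuousLinearMap.fst ℝ E ℝ).hasFDerivAt).congr_fderiv ?_
    ext v <;> simp [mul_comm]
  have dilation_deriv : HasFDerivAt (fun p : E × ℝ => (χ (p.2 • ξ) : ℂ))
      ((fderiv ℝ χ (p.2 • ξ) ξ : ℂ) • (Complex.ofRealCLM ∘L ContinuousLinearMap.snd ℝ E ℝ)) p := by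
    refine (Complex.ofRealCLM.hasFDerivAt.comp p ((hχ (p.2 • ξ)).hasFDerivAt.comp p
      ((ContinuousLinearMap.snd ℝ E ℝ).smulRight ξ).hasFDerivAt)).congr_fderiv ?_
    ext v <;> simp [mul_comm]
  refine (char_deriv.mul dilation_deriv).congr_fderiv ?_
  unfold gradSymbol
  module

variable [FiniteDimensional ℝ E] [MeasurableSpace E] [BorelSpace E]
  [NormedAddCommGroup F] {f : E → F}

theorem exists_integrable_eventually_norm_gradSymbol_mul_le (hχ : ContDiff ℝ 1 χ)
    (hχs : HasCompactSupport χ) (hf : LocallyIntegrable f) {z₀ : ℝ} (hz₀ : z₀ ≠ 0) :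
    ∃ bound : E → ℝ, Integrable bound ∧
      ∀ᶠ z in 𝓝 z₀, ∀ ξ, ‖gradSymbol χ z ξ‖ * ‖f ξ‖ ≤ bound ξ := by
  obtain ⟨M, hM⟩ := (hasCompactSupport_symbolEnvelope hχs).exists_bound_of_continuous
    (continuous_symbolEnvelope hχ)
  obtain ⟨r, hr⟩ :=
    exists_eventually_forall_smul_eq_zero (hasCompactSupport_symbolEnvelope hχs) hz₀
  refine ⟨(Metric.closedBall (0 : E) r).indicator fun ξ => M * r * ‖f ξ‖,
    (integrable_indicator_iff Metric.isClosed_closedBall.measurableSet).mpr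
      ((hf.integrableOn_isCompact (isCompact_closedBall 0 r)).norm.const_mul _),
    hr.mono fun z hz ξ =>
      (mul_le_mul_of_nonneg_right (norm_gradSymbol_le χ z ξ) (norm_nonneg _)).trans ?_⟩
  by_cases hξ : ‖ξ‖ ≤ r
  · rw [Set.indicator_of_mem (mem_closedBall_zero_iff.mpr hξ)]
    have envelope_le : symbolEnvelope χ (z • ξ) ≤ M := (le_abs_self _).trans (hM (z • ξ))
    gcongr
    exact (norm_nonneg _).trans (hM 0)
  · simp [hz ξ (not_le.mp hξ), hξ]

variable [NormedSpace ℂ F]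

/-- The extension of `𝓕⁻ f` to `E × ℝ` whose partial Fourier transform at height `z` is
`ξ ↦ χ(zξ) f(ξ)`. In Euclidean coordinates, `smoothExt χ h` is the case `f = 𝓕 h`. -/
noncomputable def dilationExt (χ : E → ℝ) (f : E → F) (p : E × ℝ) : F :=
  𝓕⁻ (fun ξ => (χ (p.2 • ξ) : ℂ) • f ξ) p.1

theorem dilationExt_eq_integral (χ : E → ℝ) (f : E → F) :
    dilationExt χ f =
      fun p => ∫ ξ, ((Real.fourierChar ⟪ξ, p.1⟫ : ℂ) * χ (p.2 • ξ)) • f ξ := by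
  ext p
  simp only [dilationExt, Real.fourierInv_eq, Circle.smul_def, mul_smul]

theorem integrable_dilation_smul (hχ : Continuous χ) (hχs : HasCompactSupport χ)
    (hf : LocallyIntegrable f) {z : ℝ} (hz : z ≠ 0) :
    Integrable fun ξ => (χ (z • ξ) : ℂ) • f ξ := by
  have dilation_continuous : Continuous fun ξ => (χ (z • ξ) : ℂ) := by fun_prop
  have dilation_hasCompactSupport : HasCompactSupport fun ξ => (χ (z • ξ) : ℂ) :=
    (hχs.comp_smul hz).comp_left Complex.ofReal_zero
  exact hf.integrable_smul_left_of_hasCompactSupport dilation_continuous dilation_hasCompactSupport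

theorem integrable_gradSymbol_smul (hχ : ContDiff ℝ 1 χ) (hχs : HasCompactSupport χ)
    (hf : LocallyIntegrable f) {z : ℝ} (hz : z ≠ 0) (v : E × ℝ) :
    Integrable fun ξ => gradSymbol χ z ξ v • f ξ := by
  obtain ⟨bound, bound_integrable, hbound⟩ :=
    exists_integrable_eventually_norm_gradSymbol_mul_le hχ hχs hf hz
  have symbol_continuous : Continuous fun ξ => gradSymbol χ z ξ v :=
    ((continuous_gradSymbol hχ).uncurry_left z).clm_apply continuous_const
  refine (bound_integrable.const_mul ‖v‖).mono'
    (symbol_continuous.aestronglyMeasurable.smul hf.aestronglyMeasurable) (ae_of_all _ fun ξ => ?_)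
  calc ‖gradSymbol χ z ξ v • f ξ‖ ≤ ‖gradSymbol χ z ξ‖ * ‖v‖ * ‖f ξ‖ := by
        rw [norm_smul]
        gcongr
        exact (gradSymbol χ z ξ).le_opNorm v
    _ = ‖v‖ * (‖gradSymbol χ z ξ‖ * ‖f ξ‖) := by ring
    _ ≤ ‖v‖ * bound ξ := by gcongr; exact hbound.self_of_nhds ξ

set_option maxSynthPendingDepth 3 in -- for `ContinuousSMul ℂ (E × ℝ →L[ℝ] ℂ)`
theorem fderiv_dilationExt_apply (hχ : ContDiff ℝ 1 χ) (hχs : HasCompactSupport χ)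
    (hf : LocallyIntegrable f) {p : E × ℝ} (hp : p.2 ≠ 0) (v : E × ℝ) :
    fderiv ℝ (dilationExt χ f) p v = 𝓕⁻ (fun ξ => gradSymbol χ p.2 ξ v • f ξ) p.1 := by
  obtain ⟨bound, bound_integrable, hbound⟩ :=
    exists_integrable_eventually_norm_gradSymbol_mul_le hχ hχs hf hp
  have χ_continuous := hχ.continuous
  have char_continuous (y : E) : Continuous fun ξ => (Real.fourierChar ⟪ξ, y⟫ : ℂ) := by fun_prop
  have multiplier_continuous (q : E × ℝ) :
      Continuous fun ξ => (Real.fourierChar ⟪ξ, q.1⟫ : ℂ) * χ (q.2 • ξ) := by fun_prop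
  have derivative_continuous :
      Continuous fun ξ => (Real.fourierChar ⟪ξ, p.1⟫ : ℂ) • gradSymbol χ p.2 ξ :=
    (char_continuous p.1).smul ((continuous_gradSymbol hχ).uncurry_left p.2)
  have multiplier_integrable :
      Integrable fun ξ => ((Real.fourierChar ⟪ξ, p.1⟫ : ℂ) * χ (p.2 • ξ)) • f ξ := by
    simpa [Circle.smul_def, mul_smul] using (Real.fourierIntegral_convergent_iff (-p.1)).mpr
      (integrable_dilation_smul hχ.continuous hχs hf hp)
  have fderiv_integral :
      fderiv ℝ (fun q : E × ℝ => ∫ ξ, ((Real.fourierChar ⟪ξ, q.1⟫ : ℂ) * χ (q.2 • ξ)) • f ξ) p v =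
        ∫ ξ, ((Real.fourierChar ⟪ξ, p.1⟫ : ℂ) • gradSymbol χ p.2 ξ) v • f ξ := by
    apply fderiv_integral_smul_apply (V := E × ℝ) (bound := bound)
      (m := fun q ξ => (Real.fourierChar ⟪ξ, q.1⟫ : ℂ) * χ (q.2 • ξ))
      (m' := fun q ξ => (Real.fourierChar ⟪ξ, q.1⟫ : ℂ) • gradSymbol χ q.2 ξ)
    · exact .of_forall fun q => (multiplier_continuous q).aestronglyMeasurable
    · exact derivative_continuous.aestronglyMeasurable
    · exact hf.aestronglyMeasurable
    · exact multiplier_integrable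
    · exact bound_integrable
    · simp only [norm_smul, Circle.norm_coe, one_mul]
      exact continuous_snd.continuousAt.eventually hbound
    · exact fun q ξ => hasFDerivAt_fourierChar_mul_dilation (hχ.differentiable one_ne_zero) ξ q
  rw [dilationExt_eq_integral, fderiv_integral, Real.fourierInv_eq]
  simp [Circle.smul_def, mul_smul]

end DilationExt

section SobolevWeight

variable {E F : Type*} [NormedAddCommGroup E] [MeasurableSpace E] {μ : Measure E}
  [NormedAddCommGroup F] {f : E → F}

theorem locallyIntegrable_of_integrable_weight [OpensMeasurableSpace E]
    [IsLocallyFiniteMeasure μ] (hf : AEStronglyMeasurable f μ)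
    (hint : Integrable (fun ξ => √(1 + ‖ξ‖ ^ 2) * ‖f ξ‖ ^ 2) μ) :
    LocallyIntegrable f μ := by
  have one_le_weight (ξ : E) : 1 ≤ √(1 + ‖ξ‖ ^ 2) :=
    Real.one_le_sqrt.mpr (le_add_of_nonneg_right (sq_nonneg _))
  have sq_integrable : Integrable (fun ξ => ‖f ξ‖ ^ 2) μ := by
    refine hint.mono (hf.norm.pow 2) (ae_of_all _ fun ξ => ?_)
    rw [norm_mul]
    refine le_mul_of_one_le_left (norm_nonneg _) ?_
    exact (one_le_weight ξ).trans (le_abs_self _)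
  exact ((memLp_two_iff_integrable_sq_norm hf).mpr sq_integrable).locallyIntegrable (by norm_num)

theorem lintegral_enorm_mul_sq_le_ofReal_integral_weight
    (hint : Integrable (fun ξ => √(1 + ‖ξ‖ ^ 2) * ‖f ξ‖ ^ 2) μ) :
    ∫⁻ ξ, ‖ξ‖ₑ * ‖f ξ‖ₑ ^ 2 ∂μ ≤ ENNReal.ofReal (∫ ξ, √(1 + ‖ξ‖ ^ 2) * ‖f ξ‖ ^ 2 ∂μ) := by
  rw [ofReal_integral_eq_lintegral_ofReal hint (ae_of_all _ fun ξ => by positivity)]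
  refine lintegral_mono fun ξ => ?_
  rw [ENNReal.ofReal_mul (by positivity), ENNReal.ofReal_pow (norm_nonneg _), ofReal_norm,
    ← ofReal_norm ξ]
  gcongr
  exact Real.le_sqrt_of_sq_le (le_add_of_nonneg_left zero_le_one)

end SobolevWeight

theorem integral_integral_restrict_le {α β : Type*} [MeasurableSpace α] [MeasurableSpace β]
    {μ : Measure α} {ν : Measure β} [SFinite ν] {g : α × β → ℝ} {B : ℝ}
    (hg : AEMeasurable g (μ.prod ν)) (hB : 0 ≤ B)
    (hgB : ∫⁻ p, ‖g p‖ₑ ∂μ.prod ν ≤ ENNReal.ofReal B) (s : Set β) :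
    ∫ a, ∫ b in s, g (a, b) ∂ν ∂μ ≤ B := by
  refine (ENNReal.ofReal_le_ofReal_iff hB).mp ?_
  calc ENNReal.ofReal (∫ a, ∫ b in s, g (a, b) ∂ν ∂μ)
      ≤ ‖∫ a, ∫ b in s, g (a, b) ∂ν ∂μ‖ₑ := Real.ofReal_le_enorm _
    _ ≤ ∫⁻ a, ∫⁻ b in s, ‖g (a, b)‖ₑ ∂ν ∂μ :=
        (enorm_integral_le_lintegral_enorm _).trans
          (lintegral_mono fun a => enorm_integral_le_lintegral_enorm _)
    _ ≤ ∫⁻ a, ∫⁻ b, ‖g (a, b)‖ₑ ∂ν ∂μ :=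
        lintegral_mono fun a => lintegral_mono' Measure.restrict_le_self le_rfl
    _ = ∫⁻ p, ‖g p‖ₑ ∂μ.prod ν := (lintegral_prod _ hg.enorm).symm
    _ ≤ ENNReal.ofReal B := hgB

section EnergyEstimate

variable {E F : Type*} [NormedAddCommGroup E] [InnerProductSpace ℝ E] [FiniteDimensional ℝ E]
  [MeasurableSpace E] [BorelSpace E] [NormedAddCommGroup F] [InnerProductSpace ℂ F]
  [CompleteSpace F] {χ : E → ℝ}

theorem lintegral_enorm_fderiv_dilationExt_slice_le {f : E → F} (hχ : ContDiff ℝ 1 χ)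
    (hχs : HasCompactSupport χ) (hf : LocallyIntegrable f) {z : ℝ} (hz : z ≠ 0) (v : E × ℝ) :
    ∫⁻ y, ‖fderiv ℝ (dilationExt χ f) (y, z) v‖ₑ ^ 2 ≤
      ‖v‖ₑ ^ 2 * ∫⁻ ξ, ‖gradSymbol χ z ξ‖ₑ ^ 2 * ‖f ξ‖ₑ ^ 2 := by
  simp only [fderiv_dilationExt_apply hχ hχs hf (p := (_, z)) hz]
  refine (lintegral_enorm_fourierInv_sq_le (integrable_gradSymbol_smul hχ hχs hf hz v)).trans ?_
  rw [← lintegral_const_mul' _ _ (by finiteness)]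
  refine lintegral_mono fun ξ => ?_
  rw [enorm_smul, mul_pow, ← mul_assoc, ← mul_pow ‖v‖ₑ, mul_comm ‖v‖ₑ]
  gcongr
  exact (gradSymbol χ z ξ).le_opENorm v

theorem exists_lintegral_enorm_fderiv_dilationExt_apply_sq_le (hχ : ContDiff ℝ 1 χ)
    (hχs : HasCompactSupport χ) :
    ∃ C : ℝ≥0, ∀ f : E → F, LocallyIntegrable f → ∀ v,
      ∫⁻ p, ‖fderiv ℝ (dilationExt χ f) p v‖ₑ ^ 2 ≤ C * ‖v‖ₑ ^ 2 * ∫⁻ ξ, ‖ξ‖ₑ * ‖f ξ‖ₑ ^ 2 := by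
  obtain ⟨C, hC⟩ := exists_lintegral_enorm_gradSymbol_sq_le hχ hχs
  refine ⟨C, fun f hf v => ?_⟩
  borelize F
  have fderiv_measurable : Measurable fun p => ‖fderiv ℝ (dilationExt χ f) p v‖ₑ ^ 2 :=
    (measurable_fderiv_apply_const ℝ _ v).enorm.pow_const 2
  have symbol_measurable :
      AEMeasurable (fun q : ℝ × E => ‖gradSymbol χ q.1 q.2‖ₑ ^ 2 * ‖f q.2‖ₑ ^ 2) :=
    ((continuous_gradSymbol hχ).nnnorm.measurable.coe_nnreal_ennreal.pow_const 2).aemeasurable.mul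
      (hf.aestronglyMeasurable.comp_snd.enorm.pow_const 2)
  calc ∫⁻ p, ‖fderiv ℝ (dilationExt χ f) p v‖ₑ ^ 2
      = ∫⁻ z : ℝ, ∫⁻ y, ‖fderiv ℝ (dilationExt χ f) (y, z) v‖ₑ ^ 2 :=
        lintegral_prod_symm _ fderiv_measurable.aemeasurable
    _ ≤ ∫⁻ z : ℝ, ‖v‖ₑ ^ 2 * ∫⁻ ξ, ‖gradSymbol χ z ξ‖ₑ ^ 2 * ‖f ξ‖ₑ ^ 2 := by
        refine lintegral_mono_ae ((Measure.ae_ne volume 0).mono fun z hz => ?_)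
        exact lintegral_enorm_fderiv_dilationExt_slice_le hχ hχs hf hz v
    _ = ‖v‖ₑ ^ 2 * ∫⁻ ξ, (∫⁻ z, ‖gradSymbol χ z ξ‖ₑ ^ 2) * ‖f ξ‖ₑ ^ 2 := by
        rw [lintegral_const_mul' _ _ (by finiteness), lintegral_lintegral_swap symbol_measurable]
        simp_rw [lintegral_mul_const' _ _ (ENNReal.pow_ne_top enorm_ne_top)]
    _ ≤ ‖v‖ₑ ^ 2 * ∫⁻ ξ, C * ‖ξ‖ₑ * ‖f ξ‖ₑ ^ 2 := by
        gcongr with ξ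
        exact hC ξ
    _ = C * ‖v‖ₑ ^ 2 * ∫⁻ ξ, ‖ξ‖ₑ * ‖f ξ‖ₑ ^ 2 := by
        simp_rw [mul_assoc (C : ℝ≥0∞)]
        rw [lintegral_const_mul' _ _ (by finiteness)]
        ring

theorem exists_integral_integral_norm_fderiv_dilationExt_sq_le {ι : Type*} [Fintype ι]
    (hχ : ContDiff ℝ 1 χ) (hχs : HasCompactSupport χ) (v : ι → E × ℝ) (s : Set ℝ) :
    ∃ C : ℝ, 0 < C ∧ ∀ f : E → F, AEStronglyMeasurable f →
      Integrable (fun ξ => √(1 + ‖ξ‖ ^ 2) * ‖f ξ‖ ^ 2) →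
      ∫ y, ∫ z in s, ∑ i, ‖fderiv ℝ (dilationExt χ f) (y, z) (v i)‖ ^ 2 ≤
        C * ∫ ξ, √(1 + ‖ξ‖ ^ 2) * ‖f ξ‖ ^ 2 := by
  obtain ⟨C, hC⟩ := exists_lintegral_enorm_fderiv_dilationExt_apply_sq_le (F := F) hχ hχs
  refine ⟨∑ i, C * ‖v i‖ ^ 2 + 1, by positivity, fun f hf hint => ?_⟩
  borelize F
  have fderiv_measurable (i : ι) : Measurable fun p => fderiv ℝ (dilationExt χ f) p (v i) :=
    measurable_fderiv_apply_const ℝ _ (v i)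
  set N := ∫ ξ, √(1 + ‖ξ‖ ^ 2) * ‖f ξ‖ ^ 2
  have N_nonneg : 0 ≤ N := integral_nonneg fun ξ => by positivity
  refine integral_integral_restrict_le
    (g := fun p => ∑ i, ‖fderiv ℝ (dilationExt χ f) p (v i)‖ ^ 2)
    (Finset.measurable_sum _ fun i _ => (fderiv_measurable i).norm.pow_const 2).aemeasurable
    (mul_nonneg (by positivity) N_nonneg) ?_ _
  calc ∫⁻ p, ‖∑ i, ‖fderiv ℝ (dilationExt χ f) p (v i)‖ ^ 2‖ₑ
      ≤ ∫⁻ p, ∑ i, ‖fderiv ℝ (dilationExt χ f) p (v i)‖ₑ ^ 2 :=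
        lintegral_mono fun p => (enorm_sum_le _ _).trans_eq (by simp [enorm_pow])
    _ = ∑ i, ∫⁻ p, ‖fderiv ℝ (dilationExt χ f) p (v i)‖ₑ ^ 2 :=
        lintegral_finsetSum _ fun i _ => (fderiv_measurable i).enorm.pow_const 2
    _ ≤ ∑ i, C * ‖v i‖ₑ ^ 2 * ENNReal.ofReal N := by
        gcongr with i
        exact (hC f (locallyIntegrable_of_integrable_weight hf hint) (v i)).trans
          (by gcongr; exact lintegral_enorm_mul_sq_le_ofReal_integral_weight hint)
    _ = ENNReal.ofReal ((∑ i, C * ‖v i‖ ^ 2) * N) := by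
        rw [ENNReal.ofReal_mul (by positivity),
          ENNReal.ofReal_sum_of_nonneg fun i _ => by positivity, Finset.sum_mul]
        simp [ENNReal.ofReal_mul, ENNReal.ofReal_pow]
    _ ≤ ENNReal.ofReal ((∑ i, C * ‖v i‖ ^ 2 + 1) * N) := by
        gcongr
        exact le_add_of_nonneg_right zero_le_one

end EnergyEstimate

section Schwartz

variable {E F : Type*} [NormedAddCommGroup E] [InnerProductSpace ℝ E] [MeasurableSpace E]
  [BorelSpace E] [SecondCountableTopology E] {μ : Measure E} [μ.HasTemperateGrowth]
  [NormedAddCommGroup F] [NormedSpace ℝ F]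

theorem integrable_sqrt_one_add_norm_sq_mul_schwartz_sq (f : 𝓢(E, F)) :
    Integrable (fun ξ => √(1 + ‖ξ‖ ^ 2) * ‖f ξ‖ ^ 2) μ := by
  have weight_temperate : (fun ξ : E => √(1 + ‖ξ‖ ^ 2)).HasTemperateGrowth := by
    simpa only [Real.sqrt_eq_rpow] using Function.hasTemperateGrowth_one_add_norm_sq_rpow E (1 / 2)
  have weighted_memLp : MemLp (fun ξ => √(1 + ‖ξ‖ ^ 2) • f ξ) 2 μ := by
    rw [← SchwartzMap.smulLeftCLM_apply weight_temperate f]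
    exact SchwartzMap.memLp _ 2 μ
  refine (weighted_memLp.norm.integrable_mul (f.memLp 2 μ).norm).congr (ae_of_all _ fun ξ => ?_)
  simp [norm_smul, abs_of_nonneg, sq, mul_assoc]

end Schwartz

section Coordinates

theorem integral_comp_ofLp {ι G : Type*} [Fintype ι] [NormedAddCommGroup G] [NormedSpace ℝ G]
    (g : (ι → ℝ) → G) : ∫ x : EuclideanSpace ℝ ι, g x.ofLp = ∫ x, g x :=
  (PiLp.volume_preserving_ofLp ι).integral_comp
    (MeasurableEquiv.toLp 2 (ι → ℝ)).symm.measurableEmbedding g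

theorem integrable_comp_ofLp {ι G : Type*} [Fintype ι] [NormedAddCommGroup G]
    {g : (ι → ℝ) → G} : Integrable (fun x : EuclideanSpace ℝ ι => g x.ofLp) ↔ Integrable g :=
  (PiLp.volume_preserving_ofLp ι).integrable_comp_emb
    (MeasurableEquiv.toLp 2 (ι → ℝ)).symm.measurableEmbedding

theorem fourier2_ofLp (h : (Fin 2 → ℝ) → ℂ) (ξ : EuclideanSpace ℝ (Fin 2)) :
    fourier2 h ξ.ofLp = 𝓕 (fun x : EuclideanSpace ℝ (Fin 2) => h x.ofLp) ξ := by
  rw [fourier2, ← integral_comp_ofLp, Real.fourier_eq']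
  congr! 2 with x
  simp [PiLp.inner_apply, mul_comm]

theorem smoothExt_eq_dilationExt (χ : (Fin 2 → ℝ) → ℝ) (h : (Fin 2 → ℝ) → ℂ)
    (p : (Fin 2 → ℝ) × ℝ) :
    smoothExt χ h p = dilationExt (fun x : EuclideanSpace ℝ (Fin 2) => χ x.ofLp)
      (𝓕 fun x : EuclideanSpace ℝ (Fin 2) => h x.ofLp) (WithLp.toLp 2 p.1, p.2) := by
  rw [smoothExt, ← integral_comp_ofLp, dilationExt, Real.fourierInv_eq']
  congr! 2 with ξ
  simp [fourier2_ofLp, PiLp.inner_apply, mul_assoc, mul_comm]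

theorem fderiv_smoothExt_apply (χ : (Fin 2 → ℝ) → ℝ) (h : (Fin 2 → ℝ) → ℂ)
    (p v : (Fin 2 → ℝ) × ℝ) :
    fderiv ℝ (smoothExt χ h) p v =
      fderiv ℝ (dilationExt (fun x : EuclideanSpace ℝ (Fin 2) => χ x.ofLp)
        (𝓕 fun x : EuclideanSpace ℝ (Fin 2) => h x.ofLp))
        (WithLp.toLp 2 p.1, p.2) (WithLp.toLp 2 v.1, v.2) := by
  let e := (PiLp.continuousLinearEquiv 2 ℝ fun _ : Fin 2 => ℝ).symm.prodCongr (.refl ℝ ℝ)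
  have smoothExt_eq_comp : smoothExt χ h = dilationExt (fun x => χ x.ofLp)
      (𝓕 fun x : EuclideanSpace ℝ (Fin 2) => h x.ofLp) ∘ e :=
    funext (smoothExt_eq_dilationExt χ h)
  rw [smoothExt_eq_comp, e.comp_right_fderiv]
  rfl

theorem integral_weight_fourier2_eq (h : (Fin 2 → ℝ) → ℂ) :
    ∫ ξ, √(1 + ∑ i, ξ i ^ 2) * ‖fourier2 h ξ‖ ^ 2 =
      ∫ ξ, √(1 + ‖ξ‖ ^ 2) * ‖𝓕 (fun x : EuclideanSpace ℝ (Fin 2) => h x.ofLp) ξ‖ ^ 2 := by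
  rw [← integral_comp_ofLp]
  simp only [fourier2_ofLp, EuclideanSpace.norm_sq_eq, Real.norm_eq_abs, sq_abs]

theorem integral_norm_fderiv_smoothExt_sq_eq (χ : (Fin 2 → ℝ) → ℝ) (h : (Fin 2 → ℝ) → ℂ)
    {ι : Type*} [Fintype ι] (v : ι → (Fin 2 → ℝ) × ℝ) (s : Set ℝ) :
    ∫ y, ∫ z in s, ∑ i, ‖fderiv ℝ (smoothExt χ h) (y, z) (v i)‖ ^ 2 =
      ∫ y, ∫ z in s, ∑ i, ‖fderiv ℝ (dilationExt (fun x : EuclideanSpace ℝ (Fin 2) => χ x.ofLp)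
        (𝓕 fun x : EuclideanSpace ℝ (Fin 2) => h x.ofLp))
        (y, z) (WithLp.toLp 2 (v i).1, (v i).2)‖ ^ 2 := by
  rw [← integral_comp_ofLp]
  simp only [fderiv_smoothExt_apply, WithLp.toLp_ofLp]

theorem integrable_weight_fourier2_iff (h : (Fin 2 → ℝ) → ℂ) :
    Integrable (fun ξ => √(1 + ∑ i, ξ i ^ 2) * ‖fourier2 h ξ‖ ^ 2) ↔
      Integrable fun ξ =>
        √(1 + ‖ξ‖ ^ 2) * ‖𝓕 (fun x : EuclideanSpace ℝ (Fin 2) => h x.ofLp) ξ‖ ^ 2 := by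
  rw [← integrable_comp_ofLp]
  simp only [fourier2_ofLp, EuclideanSpace.norm_sq_eq, Real.norm_eq_abs, sq_abs]

theorem integrable_weight_fourier2_schwartz (h : 𝓢(Fin 2 → ℝ, ℂ)) :
    Integrable fun ξ => √(1 + ∑ i, ξ i ^ 2) * ‖fourier2 h ξ‖ ^ 2 := by
  let H : 𝓢(EuclideanSpace ℝ (Fin 2), ℂ) := SchwartzMap.compCLMOfContinuousLinearEquiv ℂ
    (PiLp.continuousLinearEquiv 2 ℝ fun _ : Fin 2 => ℝ) h
  have fourier_eq : 𝓕 (fun x : EuclideanSpace ℝ (Fin 2) => h x.ofLp) = 𝓕 H :=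
    (SchwartzMap.fourier_coe H).symm
  rw [integrable_weight_fourier2_iff, fourier_eq]
  exact integrable_sqrt_one_add_norm_sq_mul_schwartz_sq (𝓕 H)

end Coordinates

theorem smoothExt_gradient_estimate_general (χ : (Fin 2 → ℝ) → ℝ)
    (hχ : ContDiff ℝ 1 χ) (hχs : HasCompactSupport χ) :
    ∃ C : ℝ, 0 < C ∧ ∀ h : (Fin 2 → ℝ) → ℂ, Integrable h →
      Integrable (fun ξ => √(1 + ∑ i, ξ i ^ 2) * ‖fourier2 h ξ‖ ^ 2) →
      (∫ y, ∫ z in Set.Iio (0 : ℝ),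
          (‖fderiv ℝ (smoothExt χ h) (y, z) (Pi.single 0 1, 0)‖ ^ 2
            + ‖fderiv ℝ (smoothExt χ h) (y, z) (Pi.single 1 1, 0)‖ ^ 2
            + ‖fderiv ℝ (smoothExt χ h) (y, z) (0, 1)‖ ^ 2))
        ≤ C * ∫ ξ, √(1 + ∑ i, ξ i ^ 2) * ‖fourier2 h ξ‖ ^ 2 := by
  obtain ⟨C, hC, bound⟩ := exists_integral_integral_norm_fderiv_dilationExt_sq_le (F := ℂ)
    (χ := fun x : EuclideanSpace ℝ (Fin 2) => χ x.ofLp)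
    (hχ.comp PiLp.contDiff_ofLp) (hχs.comp_homeomorph (PiLp.homeomorph 2 fun _ : Fin 2 => ℝ))
    ![(WithLp.toLp 2 (Pi.single 0 1), 0), (WithLp.toLp 2 (Pi.single 1 1), 0), (0, 1)] (Set.Iio 0)
  refine ⟨C, hC, fun h h_integrable weight_integrable => ?_⟩
  have energy_eq := integral_norm_fderiv_smoothExt_sq_eq χ h
    ![(Pi.single 0 1, 0), (Pi.single 1 1, 0), (0, 1)] (Set.Iio 0)
  have fourier_bound := bound (𝓕 fun x : EuclideanSpace ℝ (Fin 2) => h x.ofLp)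
    (continuous_fourier_of_integrable (integrable_comp_ofLp.mpr h_integrable)).aestronglyMeasurable
    ((integrable_weight_fourier2_iff h).mp weight_integrable)
  rw [← integral_weight_fourier2_eq] at fourier_bound
  simp only [Fin.sum_univ_three] at energy_eq fourier_bound
  exact energy_eq.trans_le fourier_bound

/-- Estimate (3.1) of Proposition 3.1 in the case `s = 0`:
`∫_S |∇η|² ≤ C |h|²_{H^{1/2}(ℝ²)}`. -/
theorem smoothExt_gradient_estimate (χ : (Fin 2 → ℝ) → ℝ)
    (hχ : ContDiff ℝ 1 χ) (hχs : HasCompactSupport χ) :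
    ∃ C : ℝ, 0 < C ∧
      ∀ h : SchwartzMap (Fin 2 → ℝ) ℂ,
        (∫ y : Fin 2 → ℝ, ∫ z in Set.Iio (0 : ℝ),
            (‖fderiv ℝ (smoothExt χ (fun x => h x)) (y, z) (Pi.single 0 1, (0 : ℝ))‖ ^ 2
              + ‖fderiv ℝ (smoothExt χ (fun x => h x)) (y, z) (Pi.single 1 1, (0 : ℝ))‖ ^ 2
              + ‖fderiv ℝ (smoothExt χ (fun x => h x)) (y, z) ((0 : Fin 2 → ℝ), (1 : ℝ))‖ ^ 2))
          ≤ C * ∫ ξ : Fin 2 → ℝ,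
              Real.sqrt (1 + ∑ i : Fin 2, ξ i ^ 2) * ‖fourier2 (fun x => h x) ξ‖ ^ 2 := by
  obtain ⟨C, hC, bound⟩ := smoothExt_gradient_estimate_general χ hχ hχs
  exact ⟨C, hC, fun h => bound h h.integrable (integrable_weight_fourier2_schwartz h)⟩
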